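/- Let M be a linear episodic MDP on (S, A) with horizon H, feature map φ : S×A → ℝ^d, reward distributions q_{M,h}(s,a) that are probability measures supported on [0,1] with means r_{M,h}(s,a), and a unique optimal policy π*_M (for every h and s, Q*_{M,h}(s,·) has a unique maximizer), with gap Δ(M). Let ε > 0 and let ω_1, …, ω_H be probability vectors on S×A such that each Λ(ω_h) is invertible. Then for every linear episodic MDP M' on (S, A) with the same horizon H and feature map φ, with reward distributions q_{M',h}(s,a) supported on [0,1], such that π*_M is not ε-optimal for M', it holds that Σ_{h=1}^H Σ_{(s,a)∈S×A} ω_h(s,a)·KL_{M|M'}(h,s,a) ≥ 3·(Δ(M)+ε)² / (10·H²·Σ_{h=1}^H σ(ω_h)), where KL_{M|M'}(h,s,a) = KL(q_{M,h}(s,a)‖q_{M',h}(s,a)) + KL(p_{M,h}(s,a,·)‖p_{M',h}(s,a,·)). -/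

import Mathlib

/-!
Let `E = ∑ h, m h`, where `m h` bounds over all `(s, a)` the one-step Bellman error
`e h (s, a) = r' + p' V*_{h+1} - Q*_h` of the optimal value function of `M` in the alternative
model `M'`.

*Comparison* (`gap_add_le_two_mul_sum`). In `M'` the optimal value is at most `V* + E` and the value
of `π*` is at least `V* - E`. Up to the first time the optimal policy of `M'` leaves `π*`, the two
policies behave alike; at that time the deviation costs at least `Δ` in `M`, so the advantage over
`π*` in `M'` is at most `2 E - Δ`. If `π*` is not `ε`-optimal in `M'`, this forces `Δ + ε ≤ 2 E`.

*Elliptical norm* (`sq_dotProduct_le`). Both models share the features, so `e h` is linear in `φ`,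
and Cauchy–Schwarz in the norm of `Λ(ω_h)` gives `e h (s, a)² ≤ σ(ω_h) D h`, with
`D h = ∑ ω_h (e h)²`. Taking `m h = √(σ(ω_h) D h)` yields `E² ≤ (∑ σ(ω_h)) (∑ D h)`.

*Information* (`two_mul_sq_le_klDiv`, `two_mul_sq_div_le_klFin`). Hoeffding's lemma and the
Donsker–Varadhan inequality bound the reward part and the transition part of `e h`; since `V*_{h+1}`
takes values in `[0, H - h]`, together they give `2 (e h)² / H² ≤ KL_{M|M'}`.

Altogether `(Δ + ε)² ≤ 4 E² ≤ 2 H² (∑ σ(ω_h)) (∑ ω KL)`, stronger than the claim, whose constant is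
`10 / 3` in place of `2`.
-/

open Matrix Finset MeasureTheory
open scoped Classical

/-- Kullback–Leibler divergence between measures: `∫ log (dα/dβ) dα` when `α ≪ β` (and the
log-likelihood ratio is integrable), `+∞` otherwise. -/
noncomputable def klDiv {Ω : Type*} [MeasurableSpace Ω] (α β : Measure Ω) : EReal :=
  if α ≪ β ∧ Integrable (llr α β) α then ((∫ x, llr α β x ∂α : ℝ) : EReal) else ⊤

/-- Kullback–Leibler divergence between probability vectors on a finite set. -/
noncomputable def klFin {S : Type*} [Fintype S] (p q : S → ℝ) : EReal :=
  if ∀ s, q s = 0 → p s = 0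
  then ((∑ s, p s * Real.log (p s / q s) : ℝ) : EReal) else ⊤

/-! ### Pinsker-type bounds -/

/-- Hoeffding's lemma for the identity on `[0,1]` combined with Gibbs' inequality for an exponential
tilting of `β`: `t (𝔼_α x - 𝔼_β x) - t² / 8 ≤ KL`, used at the optimal `t`. -/
lemma two_mul_sq_le_klDiv (α β : Measure ℝ) [IsProbabilityMeasure α] [IsProbabilityMeasure β]
    (hα : α (Set.Icc (0 : ℝ) 1)ᶜ = 0) (hβ : β (Set.Icc (0 : ℝ) 1)ᶜ = 0) :
    ((2 * ((∫ x, x ∂β) - ∫ x, x ∂α) ^ 2 : ℝ) : EReal) ≤ klDiv α β := by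
  unfold klDiv
  split_ifs with hc
  swap
  · exact le_top
  obtain ⟨hac, hint⟩ := hc
  rw [EReal.coe_le_coe_iff]
  set b := ∫ x, x ∂β with hb
  set a := ∫ x, x ∂α with ha
  have hβ' : ∀ᵐ x ∂β, id x ∈ Set.Icc (0 : ℝ) 1 := hβ
  have hα' : ∀ᵐ x ∂α, id x ∈ Set.Icc (0 : ℝ) 1 := hα
  have hsub := ProbabilityTheory.hasSubgaussianMGF_of_mem_Icc (μ := β) (X := id)
    measurable_id.aemeasurable hβ'
  have hidα : Integrable (fun x : ℝ => x) α :=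
    Integrable.of_mem_Icc 0 1 measurable_id.aemeasurable hα'
  -- the maximizer of `t ↦ t (a - b) - t² / 8`
  set t : ℝ := 4 * (a - b) with ht
  have hexp := hsub.integrable_exp_mul t
  have hmgf := hsub.mgf_le t
  simp only [id, ← hb] at hexp hmgf
  have hfα : Integrable (fun x : ℝ => t * (x - b)) α :=
    (hidα.sub (integrable_const b)).const_mul t
  have := isProbabilityMeasure_tilted hexp
  have hgibbs := InformationTheory.integral_llr_add_sub_measure_univ_nonneg
    (hac.trans (absolutelyContinuous_tilted hexp))
    (integrable_llr_tilted_right hac hfα hint hexp)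
  rw [integral_llr_tilted_right hac hfα hexp hint] at hgibbs
  have hlin : ∫ x, t * (x - b) ∂α = t * (a - b) := by
    rw [integral_const_mul, integral_sub hidα (integrable_const b)]
    simp [ha]
  have hlog : Real.log (∫ x, Real.exp (t * (x - b)) ∂β) ≤ t ^ 2 / 8 := by
    rw [Real.log_le_iff_le_exp (integral_exp_pos hexp)]
    refine hmgf.trans (Real.exp_le_exp.2 (le_of_eq ?_))
    norm_num
    ring
  rw [hlin] at hgibbs
  simp only [measureReal_def, measure_univ] at hgibbs
  nlinarith

/-- Hoeffding's lemma for a finitely supported law. -/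
lemma sum_mul_exp_le {S : Type*} [Fintype S] (q f : S → ℝ) (hq0 : ∀ s, 0 ≤ q s)
    (hq1 : ∑ s, q s = 1) (B : ℝ) (hf : ∀ s, f s ∈ Set.Icc 0 B) (t : ℝ) :
    ∑ s, q s * Real.exp (t * (f s - ∑ s', q s' * f s')) ≤ Real.exp (B ^ 2 * t ^ 2 / 8) := by
  let _ : MeasurableSpace S := ⊤
  let β : Measure S := ∑ s, ENNReal.ofReal (q s) • Measure.dirac s
  have hβ : IsProbabilityMeasure β := by
    constructor
    simp only [β, Measure.coe_finsetSum, Finset.sum_apply, Measure.smul_apply, measure_univ,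
      smul_eq_mul, mul_one]
    rw [← ENNReal.ofReal_sum_of_nonneg (fun s _ => hq0 s), hq1, ENNReal.ofReal_one]
  have hint : ∀ g : S → ℝ, ∫ x, g x ∂β = ∑ s, q s * g s := by
    intro g
    rw [integral_finsetSum_measure]
    · refine Finset.sum_congr rfl fun s _ => ?_
      rw [integral_smul_measure, integral_dirac, ENNReal.toReal_ofReal (hq0 s), smul_eq_mul]
    · intro s _
      exact (integrable_dirac (by simp)).smul_measure (by simp)
  have hsub := (ProbabilityTheory.hasSubgaussianMGF_of_mem_Icc (μ := β) (X := f)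
    (measurable_from_top).aemeasurable (Filter.Eventually.of_forall hf)).mgf_le t
  rw [ProbabilityTheory.mgf, hint, hint] at hsub
  refine hsub.trans (Real.exp_le_exp.2 (le_of_eq ?_))
  simp only [sub_zero, NNReal.coe_pow, NNReal.coe_div, coe_nnnorm, Real.norm_eq_abs,
    NNReal.coe_ofNat, div_pow, sq_abs]
  ring

/-- Donsker–Varadhan lower bound on the Kullback–Leibler divergence of probability vectors, proved
termwise from `log u ≤ u - 1`. -/
lemma sum_mul_sub_log_le {S : Type*} [Fintype S] (p q g : S → ℝ) (hp0 : ∀ s, 0 ≤ p s)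
    (hp1 : ∑ s, p s = 1) (hq0 : ∀ s, 0 ≤ q s) (hac : ∀ s, q s = 0 → p s = 0)
    (hZ : 0 < ∑ s, q s * Real.exp (g s)) :
    ∑ s, p s * g s - Real.log (∑ s, q s * Real.exp (g s)) ≤
      ∑ s, p s * Real.log (p s / q s) := by
  set Z := ∑ s, q s * Real.exp (g s) with hZdef
  have key : ∀ s, p s * g s - p s * Real.log Z + p s - q s * Real.exp (g s) / Z ≤
      p s * Real.log (p s / q s) := by
    intro s
    rcases (hp0 s).eq_or_lt with h | h
    · rw [← h]
      have : 0 ≤ q s * Real.exp (g s) / Z :=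
        div_nonneg (mul_nonneg (hq0 s) (Real.exp_pos _).le) hZ.le
      linarith
    · have hqs : 0 < q s := (hq0 s).lt_of_ne fun h0 => h.ne' (hac s h0.symm)
      have hlog := Real.log_le_sub_one_of_pos (x := q s * Real.exp (g s) / (Z * p s)) (by positivity)
      rw [Real.log_div (by positivity) (by positivity), Real.log_mul hqs.ne' (Real.exp_ne_zero _),
        Real.log_exp, Real.log_mul hZ.ne' h.ne'] at hlog
      rw [Real.log_div h.ne' hqs.ne']
      have h2 := mul_le_mul_of_nonneg_left hlog h.le
      have h3 : p s * (q s * Real.exp (g s) / (Z * p s) - 1) = q s * Real.exp (g s) / Z - p s := by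
        field_simp
      rw [h3] at h2
      linarith
  have hsum := Finset.sum_le_sum fun s (_ : s ∈ Finset.univ) => key s
  rw [Finset.sum_sub_distrib, Finset.sum_add_distrib, Finset.sum_sub_distrib, ← Finset.sum_mul,
    ← Finset.sum_div, hp1, ← hZdef, div_self hZ.ne'] at hsum
  linarith

/-- Pinsker-type bound for the expectation of a `[0, B]`-valued function. For `B = 0` the left-hand side is the junk value `0`. -/
lemma two_mul_sq_div_le_klFin {S : Type*} [Fintype S] (p q f : S → ℝ) (hp0 : ∀ s, 0 ≤ p s)
    (hp1 : ∑ s, p s = 1) (hq0 : ∀ s, 0 ≤ q s) (hq1 : ∑ s, q s = 1)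
    (B : ℝ) (hf : ∀ s, f s ∈ Set.Icc 0 B) :
    ((2 * (∑ s, q s * f s - ∑ s, p s * f s) ^ 2 / B ^ 2 : ℝ) : EReal) ≤ klFin p q := by
  unfold klFin
  split_ifs with hac
  swap
  · exact le_top
  rw [EReal.coe_le_coe_iff]
  set b := ∑ s, q s * f s with hb
  set a := ∑ s, p s * f s with ha
  -- the maximizer of `t ↦ t (a - b) - B² t² / 8`
  set t : ℝ := 4 * (a - b) / B ^ 2 with ht
  have hexp := sum_mul_exp_le q f hq0 hq1 B hf t
  rw [← hb] at hexp
  have hZ : 0 < ∑ s, q s * Real.exp (t * (f s - b)) := by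
    obtain ⟨s, -, hs⟩ : ∃ s ∈ Finset.univ, 0 < q s := by
      apply Finset.exists_lt_of_sum_lt
      rw [hq1]
      simp
    exact Finset.sum_pos' (fun s _ => mul_nonneg (hq0 s) (Real.exp_pos _).le)
      ⟨s, Finset.mem_univ s, mul_pos hs (Real.exp_pos _)⟩
  have hdv := sum_mul_sub_log_le p q (fun s => t * (f s - b)) hp0 hp1 hq0 hac hZ
  have hlog := (Real.log_le_iff_le_exp hZ).2 hexp
  have hlin : ∑ s, p s * (t * (f s - b)) = t * (a - b) := by
    have : ∀ s, p s * (t * (f s - b)) = t * (p s * f s) - t * b * p s := fun s => by ring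
    simp_rw [this]
    rw [Finset.sum_sub_distrib, ← Finset.mul_sum, ← Finset.mul_sum, hp1]
    ring
  rw [hlin] at hdv
  refine le_trans (le_of_eq ?_) ((sub_le_sub_left hlog _).trans hdv)
  by_cases hB : B = 0
  · simp [ht, hB]
  · rw [ht]
    field_simp
    ring

/-! ### The elliptical norm -/

/-- With `y = Λ⁻¹ v`, Cauchy–Schwarz for the weights `ω` bounds `(vᵀx)² = (yᵀΛx)²` by
`(yᵀΛy)(xᵀΛx)`, and `yᵀΛy = vᵀΛ⁻¹v`. -/
lemma sq_dotProduct_le {ι : Type*} [Fintype ι] {d : ℕ} (u : ι → Fin d → ℝ) (ω : ι → ℝ)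
    (hω : ∀ i, 0 ≤ ω i) (L : Matrix (Fin d) (Fin d) ℝ)
    (hL : L = ∑ i, ω i • vecMulVec (u i) (u i)) (hinv : IsUnit L) (v x : Fin d → ℝ) :
    0 ≤ v ⬝ᵥ L⁻¹.mulVec v ∧
    (v ⬝ᵥ x) ^ 2 ≤ (v ⬝ᵥ L⁻¹.mulVec v) * ∑ i, ω i * (u i ⬝ᵥ x) ^ 2 := by
  have hbil : ∀ y z : Fin d → ℝ, L.mulVec y ⬝ᵥ z = ∑ i, ω i * ((u i ⬝ᵥ y) * (u i ⬝ᵥ z)) := by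
    intro y z
    rw [hL, Matrix.sum_mulVec, sum_dotProduct]
    refine Finset.sum_congr rfl fun i _ => ?_
    rw [Matrix.smul_mulVec, smul_dotProduct, vecMulVec_mulVec]
    simp
  set y := L⁻¹.mulVec v with hy
  have hv : L.mulVec y = v := by
    rw [hy, Matrix.mulVec_mulVec,
      Matrix.mul_nonsing_inv _ ((Matrix.isUnit_iff_isUnit_det L).1 hinv), Matrix.one_mulVec]
  have h1 : v ⬝ᵥ y = ∑ i, ω i * (u i ⬝ᵥ y) ^ 2 := by
    have := hbil y y
    rw [hv] at this
    rw [this]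
    exact Finset.sum_congr rfl fun i _ => by ring
  have h2 : v ⬝ᵥ x = ∑ i, ω i * ((u i ⬝ᵥ y) * (u i ⬝ᵥ x)) := by rw [← hbil, hv]
  rw [h1, h2]
  refine ⟨Finset.sum_nonneg fun i _ => mul_nonneg (hω i) (sq_nonneg _), ?_⟩
  refine Finset.sum_sq_le_sum_mul_sum_of_sq_le_mul _ (fun i _ => mul_nonneg (hω i) (sq_nonneg _))
    (fun i _ => mul_nonneg (hω i) (sq_nonneg _)) fun i _ => le_of_eq (by ring)

/-! ### Comparison of the two models -/

lemma backward_induction {H : ℕ} {P : ℕ → Prop} (top : P (H + 1))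
    (step : ∀ h ∈ Finset.Icc 1 H, P (h + 1) → P h) : ∀ h ∈ Finset.Icc 1 (H + 1), P h := by
  intro h hh
  rw [Finset.mem_Icc] at hh
  obtain ⟨h1, h2⟩ := hh
  induction h2 using Nat.decreasingInduction with
  | self => exact top
  | of_succ k hk ih =>
    exact step k (Finset.mem_Icc.2 ⟨h1, Nat.lt_succ_iff.1 hk⟩) (ih (by omega))

lemma sum_mul_le_of_le {S : Type*} [Fintype S] (w f : S → ℝ) (hw0 : ∀ s, 0 ≤ w s)
    (hw1 : ∑ s, w s = 1) (c : ℝ) (hf : ∀ s, f s ≤ c) : ∑ s, w s * f s ≤ c := by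
  calc ∑ s, w s * f s ≤ ∑ s, w s * c :=
        Finset.sum_le_sum fun s _ => mul_le_mul_of_nonneg_left (hf s) (hw0 s)
    _ = c := by rw [← Finset.sum_mul, hw1, one_mul]

lemma sum_mul_le_sum_mul_add {S : Type*} [Fintype S] (w f g : S → ℝ) (hw0 : ∀ s, 0 ≤ w s)
    (hw1 : ∑ s, w s = 1) (c : ℝ) (hf : ∀ s, f s ≤ g s + c) :
    ∑ s, w s * f s ≤ ∑ s, w s * g s + c := by
  have h := sum_mul_le_of_le w (fun s => f s - g s) hw0 hw1 c fun s => by linarith [hf s]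
  simp_rw [mul_sub] at h
  rw [Finset.sum_sub_distrib] at h
  linarith

/-- If `m h` bounds the one-step Bellman error of `V*` in the alternative model at step `h`, and
`π` loses more than `ε` there, then `Δ + ε ≤ 2 ∑ m h`. With `E h = ∑_{k ≥ h} m k`, both value
functions of the alternative model are within `E h` of `V*` (from the relevant side). At a state
where the alternative optimal action is not `π`'s, the loss is therefore at most `2 E h - Δ`; where
the actions agree, the loss is an average of losses one step later. Hence the loss never exceeds
`max 0 (2 E h - Δ)`, and it exceeds `ε > 0` somewhere at step `1`. -/
lemma gap_add_le_two_mul_sum {S A : Type*} [Fintype S] [Fintype A] [Nonempty A] (H : ℕ)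
    (ε Δ : ℝ) (hε : 0 < ε) (V : ℕ → S → ℝ) (Q : ℕ → S → A → ℝ) (π : ℕ → S → A)
    (hVtop : ∀ s, V (H + 1) s = 0)
    (hVπ : ∀ h ∈ Finset.Icc 1 H, ∀ s, V h s = Q h s (π h s))
    (hQV : ∀ h ∈ Finset.Icc 1 H, ∀ s a, Q h s a ≤ V h s)
    (hΔ : ∀ h ∈ Finset.Icc 1 H, ∀ s a, a ≠ π h s → Δ ≤ V h s - Q h s a)
    (p' : ℕ → S → A → S → ℝ) (r' : ℕ → S → A → ℝ)
    (hp0 : ∀ h ∈ Finset.Icc 1 H, ∀ s a s', 0 ≤ p' h s a s')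
    (hp1 : ∀ h ∈ Finset.Icc 1 H, ∀ s a, ∑ s', p' h s a s' = 1)
    (m : ℕ → ℝ) (hm0 : ∀ h, 0 ≤ m h)
    (hm : ∀ h ∈ Finset.Icc 1 H, ∀ s a,
      |r' h s a + ∑ s', p' h s a s' * V (h + 1) s' - Q h s a| ≤ m h)
    (W : ℕ → S → ℝ) (U : ℕ → S → ℝ)
    (hWtop : ∀ s, W (H + 1) s = 0)
    (hW : ∀ h ∈ Finset.Icc 1 H, ∀ s, ∃ a,
      W h s = r' h s a + ∑ s', p' h s a s' * W (h + 1) s')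
    (hUtop : ∀ s, U (H + 1) s = 0)
    (hU : ∀ h ∈ Finset.Icc 1 H, ∀ s,
      U h s = r' h s (π h s) + ∑ s', p' h s (π h s) s' * U (h + 1) s')
    (hbad : ¬ ∀ s, W 1 s - ε ≤ U 1 s) :
    Δ + ε ≤ 2 * ∑ h ∈ Finset.Icc 1 H, m h := by
  set E : ℕ → ℝ := fun h => ∑ k ∈ Finset.Icc h H, m k with hE
  have hEtop : E (H + 1) = 0 := by simp [hE]
  have hEstep : ∀ h ∈ Finset.Icc 1 H, E h = m h + E (h + 1) := by
    intro h hh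
    simp only [hE]
    rw [← Finset.insert_Icc_add_one_left_eq_Icc (Finset.mem_Icc.1 hh).2, Finset.sum_insert (by simp)]
  have hWle : ∀ h ∈ Finset.Icc 1 (H + 1), ∀ s, W h s ≤ V h s + E h := by
    refine backward_induction (fun s => by rw [hWtop, hVtop, hEtop]; simp) fun h hh ih s => ?_
    obtain ⟨a, ha⟩ := hW h hh s
    have h1 := sum_mul_le_sum_mul_add _ _ _ (hp0 h hh s a) (hp1 h hh s a) _ ih
    have h2 := (abs_le.1 (hm h hh s a)).2
    linarith [hQV h hh s a, hEstep h hh]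
  have hUge : ∀ h ∈ Finset.Icc 1 (H + 1), ∀ s, V h s ≤ U h s + E h := by
    refine backward_induction (fun s => by rw [hUtop, hVtop, hEtop]; simp) fun h hh ih s => ?_
    have h1 := sum_mul_le_sum_mul_add _ _ _ (hp0 h hh s (π h s)) (hp1 h hh s (π h s)) _ ih
    have h2 := (abs_le.1 (hm h hh s (π h s))).1
    linarith [hVπ h hh s, hU h hh s, hEstep h hh]
  have hloss : ∀ h ∈ Finset.Icc 1 (H + 1), ∀ s, W h s ≤ U h s + max 0 (2 * E h - Δ) := by
    refine backward_induction (fun s => by rw [hWtop, hUtop]; simp) fun h hh ih s => ?_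
    have hh' : h ∈ Finset.Icc 1 (H + 1) := Finset.Icc_subset_Icc_right (Nat.le_succ H) hh
    have hh1 : h + 1 ∈ Finset.Icc 1 (H + 1) := by
      rw [Finset.mem_Icc] at hh ⊢
      omega
    obtain ⟨a, ha⟩ := hW h hh s
    by_cases haπ : a = π h s
    · subst haπ
      have h1 := sum_mul_le_sum_mul_add _ _ _ (hp0 h hh s (π h s)) (hp1 h hh s (π h s)) _ ih
      have h2 : max 0 (2 * E (h + 1) - Δ) ≤ max 0 (2 * E h - Δ) :=
        max_le_max le_rfl (by linarith [hEstep h hh, hm0 h])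
      linarith [hU h hh s]
    · have h1 := sum_mul_le_sum_mul_add _ _ _ (hp0 h hh s a) (hp1 h hh s a) _ (hWle _ hh1)
      have h2 := (abs_le.1 (hm h hh s a)).2
      have h3 := hUge h hh' s
      have h4 := le_max_right 0 (2 * E h - Δ)
      linarith [hΔ h hh s a haπ, hEstep h hh]
  push Not at hbad
  obtain ⟨s, hs⟩ := hbad
  have h1 := hloss 1 (by simp) s
  have h2 : ε < max 0 (2 * E 1 - Δ) := by linarith
  rcases lt_max_iff.1 h2 with h3 | h3
  · linarith
  · change Δ + ε ≤ 2 * E 1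
    linarith

lemma mean_mem_Icc (α : Measure ℝ) [IsProbabilityMeasure α] (hα : α (Set.Icc (0 : ℝ) 1)ᶜ = 0) :
    (∫ x, x ∂α) ∈ Set.Icc (0 : ℝ) 1 := by
  have hα' : ∀ᵐ x ∂α, x ∈ Set.Icc (0 : ℝ) 1 := hα
  have hid : Integrable (fun x : ℝ => x) α :=
    Integrable.of_mem_Icc 0 1 measurable_id.aemeasurable hα'
  refine ⟨integral_nonneg_of_ae (hα'.mono fun x hx => hx.1), ?_⟩
  have := integral_mono_ae hid (integrable_const (1 : ℝ)) (hα'.mono fun x hx => hx.2)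
  simpa using this

/-- Combines the reward error `a` with the transition error `b`, where the next-step value lies in
`[0, B]`: by Cauchy–Schwarz `(a + b)² ≤ (1 + B²) (a² + b² / B²)`, and `1 + B² ≤ (1 + B)²`. -/
lemma sq_add_div_le (a b B : ℝ) (hB : 0 ≤ B) (hb : B = 0 → b = 0) :
    2 * (a + b) ^ 2 / (1 + B) ^ 2 ≤ 2 * a ^ 2 + 2 * b ^ 2 / B ^ 2 := by
  rcases hB.eq_or_lt with h | h
  · rw [hb h.symm, ← h]
    simp
  · obtain ⟨c, rfl⟩ : ∃ c, b = B * c := ⟨b / B, by field_simp⟩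
    have h1 : 2 * (B * c) ^ 2 / B ^ 2 = 2 * c ^ 2 := by field_simp
    rw [h1, div_le_iff₀ (by positivity)]
    nlinarith [sq_nonneg (a * B - c), mul_nonneg hB (sq_nonneg a), mul_nonneg hB (sq_nonneg c)]

lemma ereal_coe_sum {ι : Type*} (t : Finset ι) (f : ι → ℝ) :
    ((∑ i ∈ t, f i : ℝ) : EReal) = ∑ i ∈ t, (f i : EReal) :=
  map_sum (⟨⟨Real.toEReal, EReal.coe_zero⟩, EReal.coe_add⟩ : ℝ →+ EReal) f t

/-! ### The lower bound -/

theorem stmt_17 {S A : Type*} [Fintype S] [Fintype A] [Nonempty S] [Nonempty A]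
    [DecidableEq A]
    {d : ℕ} (φ : S → A → Fin d → ℝ) (H : ℕ) (hH : 1 ≤ H)
    (ε : ℝ) (hε : 0 < ε)
    -- the episodic MDP M : linear, reward distributions supported on [0,1]
    (p : ℕ → S → A → S → ℝ) (r : ℕ → S → A → ℝ)
    (hp0 : ∀ h ∈ Finset.Icc 1 H, ∀ s a s', 0 ≤ p h s a s')
    (hp1 : ∀ h ∈ Finset.Icc 1 H, ∀ s a, ∑ s', p h s a s' = 1)
    (θ : ℕ → Fin d → ℝ) (μ : ℕ → S → Fin d → ℝ)
    (hr : ∀ h ∈ Finset.Icc 1 H, ∀ s a, r h s a = φ s a ⬝ᵥ θ h)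
    (hP : ∀ h ∈ Finset.Icc 1 H, ∀ s a s', p h s a s' = φ s a ⬝ᵥ μ h s')
    (q : ℕ → S → A → Measure ℝ)
    (hq : ∀ h ∈ Finset.Icc 1 H, ∀ s a, IsProbabilityMeasure (q h s a))
    (hqsupp : ∀ h ∈ Finset.Icc 1 H, ∀ s a, q h s a (Set.Icc (0 : ℝ) 1)ᶜ = 0)
    (hqmean : ∀ h ∈ Finset.Icc 1 H, ∀ s a, (∫ x, x ∂q h s a) = r h s a)
    -- optimal value functions of M and its unique optimal policy
    (Vstar : ℕ → S → ℝ) (Qstar : ℕ → S → A → ℝ)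
    (hVstarTop : ∀ s, Vstar (H + 1) s = 0)
    (hQstar : ∀ h ∈ Finset.Icc 1 H, ∀ s a,
      Qstar h s a = r h s a + ∑ s', p h s a s' * Vstar (h + 1) s')
    (hVstar : ∀ h ∈ Finset.Icc 1 H, ∀ s,
      Vstar h s = univ.sup' univ_nonempty fun a => Qstar h s a)
    (πstar : ℕ → S → A)
    (hπ : ∀ h ∈ Finset.Icc 1 H, ∀ s a, a ≠ πstar h s →
      Qstar h s a < Qstar h s (πstar h s))
    -- the gap of M
    (T : Finset (ℕ × S × A))
    (hTdef : T = (Finset.Icc 1 H ×ˢ (univ : Finset (S × A))).filter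
      fun x : ℕ × S × A => x.2.2 ≠ πstar x.1 x.2.1)
    (hT : T.Nonempty)
    -- the allocations ω₁, …, ω_H, their feature matrices and σ(ω_h)
    (ω : ℕ → S × A → ℝ)
    (hω0 : ∀ h ∈ Finset.Icc 1 H, ∀ sa, 0 ≤ ω h sa)
    (hω1 : ∀ h ∈ Finset.Icc 1 H, ∑ sa, ω h sa = 1)
    (Λω : ℕ → Matrix (Fin d) (Fin d) ℝ)
    (hΛω : ∀ h ∈ Finset.Icc 1 H,
      Λω h = ∑ sa : S × A, ω h sa • vecMulVec (φ sa.1 sa.2) (φ sa.1 sa.2))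
    (hinv : ∀ h ∈ Finset.Icc 1 H, IsUnit (Λω h))
    (σω : ℕ → ℝ)
    (hσω : ∀ h ∈ Finset.Icc 1 H, σω h = univ.sup' univ_nonempty
      fun sa : S × A => φ sa.1 sa.2 ⬝ᵥ (Λω h)⁻¹.mulVec (φ sa.1 sa.2)) :
    -- for every alternative linear episodic MDP M' for which πstar is not ε-optimal
    ∀ (p' : ℕ → S → A → S → ℝ) (r' : ℕ → S → A → ℝ),
      (∀ h ∈ Finset.Icc 1 H, ∀ s a s', 0 ≤ p' h s a s') →
      (∀ h ∈ Finset.Icc 1 H, ∀ s a, ∑ s', p' h s a s' = 1) →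
      ∀ (θ' : ℕ → Fin d → ℝ) (μ' : ℕ → S → Fin d → ℝ),
      (∀ h ∈ Finset.Icc 1 H, ∀ s a, r' h s a = φ s a ⬝ᵥ θ' h) →
      (∀ h ∈ Finset.Icc 1 H, ∀ s a s', p' h s a s' = φ s a ⬝ᵥ μ' h s') →
      ∀ q' : ℕ → S → A → Measure ℝ,
      (∀ h ∈ Finset.Icc 1 H, ∀ s a, IsProbabilityMeasure (q' h s a)) →
      (∀ h ∈ Finset.Icc 1 H, ∀ s a, q' h s a (Set.Icc (0 : ℝ) 1)ᶜ = 0) →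
      (∀ h ∈ Finset.Icc 1 H, ∀ s a, (∫ x, x ∂q' h s a) = r' h s a) →
      ∀ (V'star : ℕ → S → ℝ) (Q'star : ℕ → S → A → ℝ),
      (∀ s, V'star (H + 1) s = 0) →
      (∀ h ∈ Finset.Icc 1 H, ∀ s a,
        Q'star h s a = r' h s a + ∑ s', p' h s a s' * V'star (h + 1) s') →
      (∀ h ∈ Finset.Icc 1 H, ∀ s,
        V'star h s = univ.sup' univ_nonempty fun a => Q'star h s a) →
      ∀ (Vpi' : ℕ → S → ℝ) (Qpi' : ℕ → S → A → ℝ),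
      (∀ s, Vpi' (H + 1) s = 0) →
      (∀ h ∈ Finset.Icc 1 H, ∀ s a,
        Qpi' h s a = r' h s a + ∑ s', p' h s a s' * Vpi' (h + 1) s') →
      (∀ h ∈ Finset.Icc 1 H, ∀ s, Vpi' h s = Qpi' h s (πstar h s)) →
      (¬ ∀ s, V'star 1 s - ε ≤ Vpi' 1 s) →
      (((3 * (T.inf' hT (fun x => Vstar x.1 x.2.1 - Qstar x.1 x.2.1 x.2.2) + ε) ^ 2 /
          (10 * H ^ 2 * ∑ h ∈ Finset.Icc 1 H, σω h) : ℝ) : EReal) ≤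
        ∑ h ∈ Finset.Icc 1 H, ∑ sa : S × A, ((ω h sa : ℝ) : EReal) *
          (klDiv (q h sa.1 sa.2) (q' h sa.1 sa.2) +
            klFin (p h sa.1 sa.2) (p' h sa.1 sa.2))) := by
  intro p' r' hp0' hp1' θ' μ' hr' hP' q' hq' hqsupp' hqmean' V'star Q'star hV'top hQ' hV' Vpi' Qpi'
    hVpiTop hQpi hVpi hbad
  set Δ := T.inf' hT (fun x => Vstar x.1 x.2.1 - Qstar x.1 x.2.1 x.2.2) with hΔdef
  have hQV : ∀ h ∈ Finset.Icc 1 H, ∀ s a, Qstar h s a ≤ Vstar h s := by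
    intro h hh s a
    rw [hVstar h hh s]
    exact Finset.le_sup' (fun a => Qstar h s a) (Finset.mem_univ a)
  have hVπ : ∀ h ∈ Finset.Icc 1 H, ∀ s, Vstar h s = Qstar h s (πstar h s) := by
    intro h hh s
    refine le_antisymm ?_ (hQV h hh s _)
    rw [hVstar h hh s]
    refine Finset.sup'_le _ _ fun a _ => ?_
    by_cases ha : a = πstar h s
    · rw [ha]
    · exact (hπ h hh s a ha).le
  have hΔ : ∀ h ∈ Finset.Icc 1 H, ∀ s a, a ≠ πstar h s → Δ ≤ Vstar h s - Qstar h s a := by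
    intro h hh s a ha
    have hmem : (h, s, a) ∈ T := by
      rw [hTdef]
      simpa [Finset.mem_Icc] using ⟨Finset.mem_Icc.1 hh, ha⟩
    exact Finset.inf'_le (fun x : ℕ × S × A => Vstar x.1 x.2.1 - Qstar x.1 x.2.1 x.2.2) hmem
  have hΔpos : 0 < Δ := by
    rw [hΔdef, Finset.lt_inf'_iff]
    rintro ⟨h, s, a⟩ hx
    rw [hTdef, Finset.mem_filter, Finset.mem_product] at hx
    have := hπ h hx.1.1 s a hx.2
    rw [← hVπ h hx.1.1 s] at this
    exact sub_pos.2 this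
  have hVbd : ∀ h ∈ Finset.Icc 1 (H + 1), ∀ s, Vstar h s ∈ Set.Icc (0 : ℝ) (H + 1 - h) := by
    refine backward_induction (fun s => by rw [hVstarTop]; simp) fun h hh ih s => ?_
    have := hq h hh s (πstar h s)
    have hrbd := mean_mem_Icc _ (hqsupp h hh s (πstar h s))
    rw [hqmean h hh] at hrbd
    have hnn := Finset.sum_nonneg fun s' (_ : s' ∈ Finset.univ) =>
      mul_nonneg (hp0 h hh s (πstar h s) s') (ih s').1
    have hub := sum_mul_le_of_le _ _ (hp0 h hh s (πstar h s)) (hp1 h hh s (πstar h s)) _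
      fun s' => (ih s').2
    rw [hVπ h hh s, hQstar h hh]
    push_cast at hub
    constructor <;> linarith [hrbd.1, hrbd.2]
  -- the Bellman error of `Vstar` in the alternative model; it is linear in the features
  set e : ℕ → S × A → ℝ := fun h sa =>
    r' h sa.1 sa.2 + ∑ s', p' h sa.1 sa.2 s' * Vstar (h + 1) s' - Qstar h sa.1 sa.2 with he
  have helin : ∀ h ∈ Finset.Icc 1 H, ∀ sa : S × A, e h sa =
      φ sa.1 sa.2 ⬝ᵥ ((θ' h - θ h) + ∑ s', Vstar (h + 1) s' • (μ' h s' - μ h s')) := by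
    intro h hh sa
    simp only [he]
    rw [hQstar h hh, hr' h hh, hr h hh, dotProduct_add, dotProduct_sub, dotProduct_sum]
    simp_rw [dotProduct_smul, dotProduct_sub, ← hP' h hh, ← hP h hh, smul_eq_mul, mul_sub]
    rw [Finset.sum_sub_distrib]
    simp_rw [mul_comm (Vstar (h + 1) _)]
    ring
  set D : ℕ → ℝ := fun h => ∑ sa, ω h sa * e h sa ^ 2 with hD
  have hD0 : ∀ h ∈ Finset.Icc 1 H, 0 ≤ D h := fun h hh =>
    Finset.sum_nonneg fun sa _ => mul_nonneg (hω0 h hh sa) (sq_nonneg _)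
  have hσ_le : ∀ h ∈ Finset.Icc 1 H, ∀ sa : S × A,
      φ sa.1 sa.2 ⬝ᵥ (Λω h)⁻¹.mulVec (φ sa.1 sa.2) ≤ σω h := by
    intro h hh sa
    rw [hσω h hh]
    exact Finset.le_sup' (fun sa : S × A => φ sa.1 sa.2 ⬝ᵥ (Λω h)⁻¹.mulVec (φ sa.1 sa.2))
      (Finset.mem_univ sa)
  have hcs := fun h (hh : h ∈ Finset.Icc 1 H) (sa : S × A) =>
    sq_dotProduct_le (fun sa : S × A => φ sa.1 sa.2) (ω h) (hω0 h hh) (Λω h) (hΛω h hh)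
      (hinv h hh) (φ sa.1 sa.2) ((θ' h - θ h) + ∑ s', Vstar (h + 1) s' • (μ' h s' - μ h s'))
  have hσ0 : ∀ h ∈ Finset.Icc 1 H, 0 ≤ σω h := fun h hh =>
    (hcs h hh (Classical.arbitrary _)).1.trans (hσ_le h hh _)
  have he_sq : ∀ h ∈ Finset.Icc 1 H, ∀ sa, e h sa ^ 2 ≤ σω h * D h := by
    intro h hh sa
    have h1 := (hcs h hh sa).2
    simp only [← helin h hh] at h1
    exact h1.trans (mul_le_mul_of_nonneg_right (hσ_le h hh sa) (hD0 h hh))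
  have hmain : Δ + ε ≤ 2 * ∑ h ∈ Finset.Icc 1 H, Real.sqrt (σω h * D h) := by
    refine gap_add_le_two_mul_sum H ε Δ hε Vstar Qstar πstar hVstarTop hVπ hQV hΔ p' r' hp0' hp1'
      _ (fun h => Real.sqrt_nonneg _) (fun h hh s a => Real.abs_le_sqrt (he_sq h hh (s, a)))
      V'star Vpi' hV'top (fun h hh s => ?_) hVpiTop (fun h hh s => ?_) hbad
    · obtain ⟨a, -, ha⟩ := Finset.exists_mem_eq_sup' univ_nonempty fun a => Q'star h s a
      exact ⟨a, by rw [hV' h hh s, ha, hQ' h hh]⟩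
    · rw [hVpi h hh s, hQpi h hh]
  have hCS : (∑ h ∈ Finset.Icc 1 H, Real.sqrt (σω h * D h)) ^ 2 ≤
      (∑ h ∈ Finset.Icc 1 H, σω h) * ∑ h ∈ Finset.Icc 1 H, D h :=
    Finset.sum_sq_le_sum_mul_sum_of_sq_le_mul _ hσ0 hD0 fun h hh =>
      (Real.sq_sqrt (mul_nonneg (hσ0 h hh) (hD0 h hh))).le
  have hHpos : (0 : ℝ) < H := by exact_mod_cast hH
  have hsumσ := Finset.sum_nonneg hσ0
  have hsumD := Finset.sum_nonneg hD0
  have hreal : 3 * (Δ + ε) ^ 2 / (10 * H ^ 2 * ∑ h ∈ Finset.Icc 1 H, σω h) ≤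
      ∑ h ∈ Finset.Icc 1 H, ∑ sa, ω h sa * (2 * e h sa ^ 2 / H ^ 2) := by
    have hrw : ∑ h ∈ Finset.Icc 1 H, ∑ sa, ω h sa * (2 * e h sa ^ 2 / H ^ 2) =
        2 / H ^ 2 * ∑ h ∈ Finset.Icc 1 H, D h := by
      simp only [hD, Finset.mul_sum]
      exact Finset.sum_congr rfl fun h _ => Finset.sum_congr rfl fun sa _ => by ring
    rw [hrw]
    refine div_le_of_le_mul₀ (by positivity) (by positivity) ?_
    have h1 : (Δ + ε) ^ 2 ≤ (2 * ∑ h ∈ Finset.Icc 1 H, Real.sqrt (σω h * D h)) ^ 2 :=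
      pow_le_pow_left₀ (by linarith) hmain 2
    have h2 : 2 / (H : ℝ) ^ 2 * (∑ h ∈ Finset.Icc 1 H, D h) *
        (10 * H ^ 2 * ∑ h ∈ Finset.Icc 1 H, σω h) =
        20 * ((∑ h ∈ Finset.Icc 1 H, σω h) * ∑ h ∈ Finset.Icc 1 H, D h) := by
      field_simp
      ring
    rw [h2]
    have h3 := mul_nonneg hsumσ hsumD
    nlinarith
  have hkl : ∀ h ∈ Finset.Icc 1 H, ∀ sa : S × A, ((2 * e h sa ^ 2 / H ^ 2 : ℝ) : EReal) ≤
      klDiv (q h sa.1 sa.2) (q' h sa.1 sa.2) + klFin (p h sa.1 sa.2) (p' h sa.1 sa.2) := by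
    rintro h hh ⟨s, a⟩
    have := hq h hh s a
    have := hq' h hh s a
    have hle : h ≤ H := (Finset.mem_Icc.1 hh).2
    have hB : (0 : ℝ) ≤ (H : ℝ) - h := sub_nonneg.2 (by exact_mod_cast hle)
    have hf : ∀ s', Vstar (h + 1) s' ∈ Set.Icc (0 : ℝ) ((H : ℝ) - h) := by
      intro s'
      have := hVbd (h + 1) (by rw [Finset.mem_Icc] at hh ⊢; omega) s'
      push_cast at this
      rwa [add_sub_add_right_eq_sub] at this
    have h1 := two_mul_sq_le_klDiv _ _ (hqsupp h hh s a) (hqsupp' h hh s a)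
    rw [hqmean h hh, hqmean' h hh] at h1
    have h2 := two_mul_sq_div_le_klFin (p h s a) (p' h s a) (Vstar (h + 1)) (hp0 h hh s a)
      (hp1 h hh s a) (hp0' h hh s a) (hp1' h hh s a) _ hf
    refine le_trans ?_ (add_le_add h1 h2)
    rw [← EReal.coe_add, EReal.coe_le_coe_iff]
    have h3 := sq_add_div_le (r' h s a - r h s a)
      (∑ s', p' h s a s' * Vstar (h + 1) s' - ∑ s', p h s a s' * Vstar (h + 1) s') _ hB ?_
    · refine le_trans ?_ h3
      have h4 : (r' h s a - r h s a) + (∑ s', p' h s a s' * Vstar (h + 1) s' -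
          ∑ s', p h s a s' * Vstar (h + 1) s') = e h (s, a) := by
        simp only [he]
        rw [hQstar h hh]
        ring
      rw [h4]
      -- `1 + (H - h) ≤ H` because `1 ≤ h`
      have h5 : (1 : ℝ) ≤ h := by exact_mod_cast (Finset.mem_Icc.1 hh).1
      gcongr
      linarith
    · intro hB0
      have hV0 : ∀ s', Vstar (h + 1) s' = 0 := fun s' => le_antisymm (hB0 ▸ (hf s').2) (hf s').1
      simp [hV0]
  refine (EReal.coe_le_coe_iff.2 hreal).trans ?_
  rw [ereal_coe_sum]
  refine Finset.sum_le_sum fun h hh => ?_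
  rw [ereal_coe_sum]
  refine Finset.sum_le_sum fun sa _ => ?_
  rw [EReal.coe_mul]
  exact mul_le_mul_of_nonneg_left (hkl h hh sa) (EReal.coe_nonneg.2 (hω0 h hh sa))
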